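/- Let k ≥ 1, let n₁, …, n_k ∈ ℕ², and let β, γ be multi-indices. If the matrix entry of the composition satisfies (D^{(n₁)} ⋯ D^{(n_k)})_β^γ ≠ 0, then [γ] = [β] − k, |γ|_p = |β|_p + Σ_{i=1}^k |n_i|, and γ(0) ≤ β(0) + #{ i : n_i = (0,0) }. -/

import Mathlib

open Finsupp

noncomputable section

/-- The index set `I`: symbols `z_k` for `k : ℕ` (left summand) and `z_n` for
`n ∈ ℕ² \ {(0,0)}` (right summand). -/
abbrev RSIdx : Type := ℕ ⊕ {n : ℕ × ℕ // n ≠ (0, 0)}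

/-- Multi-indices: finitely supported functions from the index set to `ℕ`. -/
abbrev MIdx : Type := RSIdx →₀ ℕ

/-- The unit multi-index `e_k`. -/
def eK (k : ℕ) : MIdx := Finsupp.single (Sum.inl k) 1

/-- The unit multi-index `e_n` for `n ≠ (0,0)`. -/
def eN (n : {n : ℕ × ℕ // n ≠ (0, 0)}) : MIdx := Finsupp.single (Sum.inr n) 1

/-- The scaled length `[β] = Σ_k k·β(k) − Σ_{n≠(0,0)} β(n)`. -/
def slen (β : MIdx) : ℤ :=
  β.sum fun i m =>
    match i with
    | Sum.inl k => (k : ℤ) * (m : ℤ)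
    | Sum.inr _ => -(m : ℤ)

/-- The parabolic length `|n| = n₁ + 2 n₂` of `n ∈ ℕ²`. -/
def plen (n : ℕ × ℕ) : ℕ := n.1 + 2 * n.2

/-- The polynomial part `|β|_p = Σ_{n≠(0,0)} |n|·β(n)`. -/
def polyPart (β : MIdx) : ℕ :=
  β.sum fun i m =>
    match i with
    | Sum.inl _ => 0
    | Sum.inr n => plen n.val * m

/-- The homogeneity `|β| = α(1+[β]) + |β|_p`. -/
def homog (α : ℝ) (β : MIdx) : ℝ := α * (1 + (slen β : ℝ)) + (polyPart β : ℝ)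

/-- `β` is purely polynomial iff `β = e_n` for some `n ≠ (0,0)`. -/
def PurelyPoly (β : MIdx) : Prop := ∃ n, β = eN n

/-- `β` is populated iff it is purely polynomial or `[β] ≥ 0`. -/
def Populated (β : MIdx) : Prop := PurelyPoly β ∨ 0 ≤ slen β

/-- The ordinal `|β|_≺ = [β] + (1/2)|β|_p + (1/4)β(0)`. -/
def precNorm (β : MIdx) : ℝ :=
  (slen β : ℝ) + (polyPart β : ℝ) / 2 + (β (Sum.inl 0) : ℝ) / 4

open Classical in
/-- The matrix entry `(D^(0))_β^γ` of the derivation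
`D^(0) = Σ_k (k+1) z_{k+1} ∂_{z_k}`: it is `(k+1)·γ(k)` if there exists `k` with
`γ + e_{k+1} = β + e_k` (such `k` is unique), and `0` otherwise. -/
def D0 (β γ : MIdx) : ℕ :=
  if h : ∃ k : ℕ, γ + eK (k + 1) = β + eK k then
    (h.choose + 1) * γ (Sum.inl h.choose)
  else 0

open Classical in
/-- The matrix entry of `D^(n)` for `n ∈ ℕ²`, where `D^((0,0))` means `D^(0)` and,
for `n ≠ (0,0)`, `(D^(n))_β^γ = β(n) + 1` if `γ = β + e_n`, and `0` otherwise. -/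
def DMat (n : ℕ × ℕ) : MIdx → MIdx → ℕ :=
  if hn : n = (0, 0) then D0
  else fun β γ =>
    if γ = β + eN ⟨n, hn⟩ then β (Sum.inr ⟨n, hn⟩) + 1 else 0

/-- Composition of two `ℕ`-valued matrices indexed by multi-indices; the sum over the
intermediate multi-index is well-defined (by row-finiteness) as a `finsum`. -/
def matMul (A B : MIdx → MIdx → ℕ) : MIdx → MIdx → ℕ :=
  fun β γ => ∑ᶠ δ : MIdx, A β δ * B δ γ

open Classical in
/-- The identity matrix. -/
def matId : MIdx → MIdx → ℕ := fun β γ => if γ = β then 1 else 0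

/-- Composition of a list of matrices. -/
def matProd : List (MIdx → MIdx → ℕ) → MIdx → MIdx → ℕ
  | [] => matId
  | A :: l => matMul A (matProd l)

/-- The `l`-fold matrix power of `D^(0)`. -/
def D0pow : ℕ → MIdx → MIdx → ℕ
  | 0 => matId
  | l + 1 => matMul D0 (D0pow l)

/-!
A nonzero entry of a product of matrices comes from a chain of intermediate multi-indices along
which every factor has a nonzero entry, so it suffices to follow a single step. A step of `D^(n)`
with `n ≠ (0, 0)` adds `e_n`, and a step of `D^(0)` replaces some `e_{k+1}` by `e_k`. As `[·]`,
`|·|_p` and evaluation at `z_0` are additive, the effect of either step is read off from the values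
on unit multi-indices.
-/

theorem sum_map_ite_eq_count {α : Type*} [BEq α] [LawfulBEq α] [DecidableEq α] (a : α)
    (l : List α) : (l.map fun b => if b = a then 1 else 0).sum = l.count a := by
  induction l with
  | nil => rfl
  | cons b l ih => simp [List.count_cons, ih, add_comm]

theorem slen_add (β γ : MIdx) : slen (β + γ) = slen β + slen γ := by
  unfold slen
  refine Finsupp.sum_add_index' ?_ ?_
  · rintro (_ | _) <;> simp
  · rintro (_ | _) a b <;> push_cast <;> ring

theorem polyPart_add (β γ : MIdx) : polyPart (β + γ) = polyPart β + polyPart γ := by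
  unfold polyPart
  refine Finsupp.sum_add_index' ?_ ?_
  · rintro (_ | _) <;> simp
  · rintro (_ | _) a b
    · rfl
    · exact mul_add _ _ _

@[simp] theorem slen_eK (k : ℕ) : slen (eK k) = k := by
  simp [slen, eK]

@[simp] theorem slen_eN (n : {n : ℕ × ℕ // n ≠ (0, 0)}) : slen (eN n) = -1 := by
  simp [slen, eN]

@[simp] theorem polyPart_eK (k : ℕ) : polyPart (eK k) = 0 := by
  simp [polyPart, eK]

@[simp] theorem polyPart_eN (n : {n : ℕ × ℕ // n ≠ (0, 0)}) : polyPart (eN n) = plen n := by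
  simp [polyPart, eN]

theorem eK_apply_le_one (k : ℕ) (i : RSIdx) : eK k i ≤ 1 := by
  classical
  rw [eK, Finsupp.single_apply]
  split_ifs <;> simp

section Products

theorem eq_of_matId_ne_zero {β γ : MIdx} (h : matId β γ ≠ 0) : γ = β := by
  by_contra hne
  exact h (if_neg hne)

theorem exists_ne_zero_of_matMul_ne_zero {A B : MIdx → MIdx → ℕ} {β γ : MIdx}
    (h : matMul A B β γ ≠ 0) : ∃ δ, A β δ ≠ 0 ∧ B δ γ ≠ 0 := by
  by_contra! hzero
  refine h (finsum_eq_zero_of_forall_eq_zero fun δ => mul_eq_zero.mpr ?_)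
  exact or_iff_not_imp_left.mpr (hzero δ)

variable {ι M : Type*} [AddMonoid M] {A : ι → MIdx → MIdx → ℕ} {w : ι → M}

theorem rel_of_matProd_ne_zero {R : M → MIdx → MIdx → Prop} (refl : ∀ β, R 0 β β)
    (trans : ∀ {a b β δ γ}, R a β δ → R b δ γ → R (a + b) β γ)
    (step : ∀ i β γ, A i β γ ≠ 0 → R (w i) β γ)
    {l : List ι} {β γ : MIdx} (h : matProd (l.map A) β γ ≠ 0) : R (l.map w).sum β γ := by
  induction l generalizing β with
  | nil => exact eq_of_matId_ne_zero h ▸ refl γ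
  | cons i l ih =>
    obtain ⟨δ, hA, hl⟩ := exists_ne_zero_of_matMul_ne_zero h
    rw [List.map_cons, List.sum_cons]
    exact trans (step i β δ hA) (ih hl)

theorem eq_add_sum_of_matProd_ne_zero {f : MIdx → M}
    {l : List ι} {β γ : MIdx} (h : matProd (l.map A) β γ ≠ 0)
    (step : ∀ i β γ, A i β γ ≠ 0 → f γ = f β + w i) :
    f γ = f β + (l.map w).sum :=
  rel_of_matProd_ne_zero (R := fun a β γ => f γ = f β + a) (fun _ => (add_zero _).symm)
    (fun h₁ h₂ => by rw [h₂, h₁, add_assoc]) step h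

theorem le_add_sum_of_matProd_ne_zero [Preorder M] [AddRightMono M] {f : MIdx → M}
    {l : List ι} {β γ : MIdx} (h : matProd (l.map A) β γ ≠ 0)
    (step : ∀ i β γ, A i β γ ≠ 0 → f γ ≤ f β + w i) :
    f γ ≤ f β + (l.map w).sum :=
  rel_of_matProd_ne_zero (R := fun a β γ => f γ ≤ f β + a) (fun _ => (add_zero _).ge)
    (fun {a b β δ γ} h₁ h₂ => calc
      f γ ≤ f δ + b := h₂
      _ ≤ f β + a + b := by gcongr
      _ = f β + (a + b) := add_assoc _ _ _) step h

end Products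

section Entries

variable {n : ℕ × ℕ} {β γ : MIdx}

theorem exists_add_eK_of_D0_ne_zero (h : D0 β γ ≠ 0) : ∃ k, γ + eK (k + 1) = β + eK k := by
  by_contra hk
  exact h (dif_neg hk)

theorem DMat_ne_zero_cases (h : DMat n β γ ≠ 0) :
    (n = (0, 0) ∧ ∃ k, γ + eK (k + 1) = β + eK k) ∨
      ∃ hn : n ≠ (0, 0), γ = β + eN ⟨n, hn⟩ := by
  unfold DMat at h
  split_ifs at h with hn
  · exact .inl ⟨hn, exists_add_eK_of_D0_ne_zero h⟩
  · exact .inr ⟨hn, (ite_ne_right_iff.mp h).1⟩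

theorem slen_eq_of_DMat_ne_zero (h : DMat n β γ ≠ 0) : slen γ = slen β + -1 := by
  obtain ⟨-, k, hk⟩ | ⟨hn, rfl⟩ := DMat_ne_zero_cases h
  · have hlen := congrArg slen hk
    simp only [slen_add, slen_eK, Nat.cast_add, Nat.cast_one] at hlen
    linarith
  · rw [slen_add, slen_eN]

theorem polyPart_eq_of_DMat_ne_zero (h : DMat n β γ ≠ 0) :
    polyPart γ = polyPart β + plen n := by
  obtain ⟨rfl, k, hk⟩ | ⟨hn, rfl⟩ := DMat_ne_zero_cases h
  · simpa [polyPart_add, plen] using congrArg polyPart hk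
  · rw [polyPart_add, polyPart_eN]

theorem apply_zero_le_of_DMat_ne_zero (h : DMat n β γ ≠ 0) :
    γ (Sum.inl 0) ≤ β (Sum.inl 0) + if n = (0, 0) then 1 else 0 := by
  obtain ⟨rfl, k, hk⟩ | ⟨hn, rfl⟩ := DMat_ne_zero_cases h
  · calc
      γ (Sum.inl 0) ≤ (γ + eK (k + 1)) (Sum.inl 0) := Nat.le_add_right _ _
      _ = β (Sum.inl 0) + eK k (Sum.inl 0) := by rw [hk, Finsupp.add_apply]
      _ ≤ β (Sum.inl 0) + 1 := by gcongr; exact eK_apply_le_one k _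
  · simp [eN]

end Entries

/-- If `(D^{(n₁)} ⋯ D^{(n_k)})_β^γ ≠ 0` for a nonempty list `n₁, …, n_k`, then
`[γ] = [β] − k`, `|γ|_p = |β|_p + Σᵢ |nᵢ|`, and `γ(0) ≤ β(0) + #{i : nᵢ = (0,0)}`. -/
theorem statement11 (ns : List (ℕ × ℕ)) (hne : ns ≠ []) (β γ : MIdx)
    (h : matProd (ns.map DMat) β γ ≠ 0) :
    slen γ = slen β - ns.length
    ∧ polyPart γ = polyPart β + (ns.map plen).sum
    ∧ γ (Sum.inl 0) ≤ β (Sum.inl 0) + ns.count ((0, 0) : ℕ × ℕ) := by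
  refine ⟨?_, ?_, ?_⟩
  · have hslen := eq_add_sum_of_matProd_ne_zero h fun _ _ _ => slen_eq_of_DMat_ne_zero
    simpa [← sub_eq_add_neg] using hslen
  · exact eq_add_sum_of_matProd_ne_zero h fun _ _ _ => polyPart_eq_of_DMat_ne_zero
  · have hzero := le_add_sum_of_matProd_ne_zero (f := fun β => β (Sum.inl 0)) h
      fun _ _ _ => apply_zero_le_of_DMat_ne_zero
    rwa [sum_map_ite_eq_count] at hzero
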